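/- arXiv:2201.05328 — 2 statements merged into one kernel-verified Lean document; each statement's English description precedes it below -/
import Mathlib

section
/- Let k ∈ (0, 1) and k' = √(1 − k²). There exists a meromorphic function y on a domain of ℂ containing ℝ and the point ikK(k') such that: y agrees on ℝ with the second component x̃₂ of the solution of ẋ₁ = x₂, ẋ₂ = −sin x₁ with x̃(0) = (0, 2/k); y satisfies the algebraic differential equation (y')² = 1 − (1 − 2/k² + y²/2)² wherever it is finite; y has a simple pole at t = ikK(k') with residue −2i; and for all ω > 0, all real β, δ, θ, and all sufficiently small ρ > 0, the contour integral over the positively oriented circle |t − ikK(k')| = ρ satisfies ∮ y(t)(β cos(ωt + θ) − δ y(t)) dt = 4πβ(cosh(ωkK(k')) cos θ − i sinh(ωkK(k')) sin θ); in particular this contour integral is nonzero for every θ whenever β > 0. -/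
open Real Filter Topology

/-- The complete elliptic integral of the first kind. -/
noncomputable def Kell (k : ℝ) : ℝ :=
  ∫ φ in (0 : ℝ)..(π / 2), 1 / Real.sqrt (1 - k ^ 2 * Real.sin φ ^ 2)

/-- The differential system `s' = c p / 2`, `c' = -s p / 2`, `p' = -2 μ s c` on the level set
`s² + c² = 1`, `p² = 4 j² - 4 μ s²`: up to scaling, these are the Jacobi functions `sn`, `cn`,
`dn`. -/
structure JacobiTriple (j μ : ℝ) (s c p : ℝ → ℝ) : Prop where
  hasDerivAt_s : ∀ t, HasDerivAt s (c t * p t / 2) t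
  hasDerivAt_c : ∀ t, HasDerivAt c (-(s t * p t / 2)) t
  hasDerivAt_p : ∀ t, HasDerivAt p (-(2 * μ * s t * c t)) t
  sq_add_sq : ∀ t, s t ^ 2 + c t ^ 2 = 1
  sq_p : ∀ t, p t ^ 2 = 4 * j ^ 2 - 4 * μ * s t ^ 2

/-- Cauchy–Riemann criterion in terms of the two partial derivatives. -/
theorem hasDerivAt_of_partialDeriv {G : ℝ → ℝ → ℂ} {z w : ℂ}
    (hG : DifferentiableAt ℝ (fun z : ℂ => G z.re z.im) z)
    (hre : HasDerivAt (fun a => G a z.im) w z.re)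
    (him : HasDerivAt (fun b => G z.re b) (Complex.I * w) z.im) :
    HasDerivAt (fun z : ℂ => G z.re z.im) w z := by
  have hL := hG.hasFDerivAt
  set L := fderiv ℝ (fun z : ℂ => G z.re z.im) z
  have h1 : L 1 = w := by
    have hl : HasDerivAt (fun a : ℝ => (a : ℂ) + z.im * Complex.I) 1 z.re :=
      (Complex.ofRealCLM.hasDerivAt (x := z.re)).add_const _
    have := HasFDerivAt.comp_hasDerivAt_of_eq z.re hL hl (by simp)
    exact this.unique (hre.congr_of_eventuallyEq (Eventually.of_forall fun _ => by simp))
  have h2 : L Complex.I = Complex.I * w := by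
    have hl : HasDerivAt (fun b : ℝ => (z.re : ℂ) + b * Complex.I) Complex.I z.im := by
      simpa using ((Complex.ofRealCLM.hasDerivAt (x := z.im)).mul_const Complex.I).const_add
        (z.re : ℂ)
    have := HasFDerivAt.comp_hasDerivAt_of_eq z.im hL hl (by simp)
    exact this.unique (him.congr_of_eventuallyEq (Eventually.of_forall fun _ => by simp))
  have h3 : L Complex.I = Complex.I • L 1 := by rw [h1, h2, smul_eq_mul]
  have := (hL.complexOfReal_hasFDerivAt h3).hasDerivAt
  simpa [h1] using this

/-- The numerator of the extended velocity (`ε = i`) or its conjugate (`ε = -i`). -/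
noncomputable def velNum (j : ℝ) (S C Y s c P : ℝ → ℝ) (ε : ℂ) (a b : ℝ) : ℂ :=
  j / 2 * c b * Y a * P b - 2 * ε * j * S a * C a * s b

/-- The denominator of the extended velocity. -/
noncomputable def velDen (j : ℝ) (S s c : ℝ → ℝ) (a b : ℝ) : ℂ :=
  j ^ 2 * (c b : ℂ) ^ 2 + (S a : ℂ) ^ 2 * (s b : ℂ) ^ 2

/-- The denominator of the reciprocal of the extended velocity. -/
noncomputable def recDen (j : ℝ) (S P : ℝ → ℝ) (a b : ℝ) : ℂ :=
  j ^ 2 * ((P b : ℂ) ^ 2 - 4 * (S a : ℂ) ^ 2)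

section JacobiTriple

variable {j : ℝ} {S C Y s c P : ℝ → ℝ}

theorem JacobiTriple.ofReal_relations {μ : ℝ} (h : JacobiTriple j μ s c P) (t : ℝ) :
    (s t : ℂ) ^ 2 + (c t : ℂ) ^ 2 = 1 ∧
      (P t : ℂ) ^ 2 = 4 * (j : ℂ) ^ 2 - 4 * (μ : ℂ) * (s t : ℂ) ^ 2 :=
  ⟨by exact_mod_cast h.sq_add_sq t, by exact_mod_cast h.sq_p t⟩

theorem JacobiTriple.velNum_mul_velNum (h₁ : JacobiTriple j 1 S C Y)
    (h₂ : JacobiTriple j (j ^ 2 - 1) s c P) (a b : ℝ) :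
    velNum j S C Y s c P Complex.I a b * velNum j S C Y s c P (-Complex.I) a b =
      recDen j S P a b * velDen j S s c a b := by
  obtain ⟨r1, r2⟩ := h₁.ofReal_relations a
  obtain ⟨r3, r4⟩ := h₂.ofReal_relations b
  push_cast at r2 r4
  have hi := Complex.I_sq
  unfold velNum recDen velDen
  generalize Complex.I = i, (S a : ℂ) = S, (C a : ℂ) = C, (Y a : ℂ) = Y, (s b : ℂ) = s,
    (c b : ℂ) = c, (P b : ℂ) = P, (j : ℂ) = j at *
  grind

theorem JacobiTriple.differentiableAt_comp {μ : ℝ} (h : JacobiTriple j μ s c P) {f : ℂ → ℝ}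
    {z : ℂ} (hf : DifferentiableAt ℝ f z) :
    DifferentiableAt ℝ (fun z : ℂ => (s (f z) : ℂ)) z ∧
    DifferentiableAt ℝ (fun z : ℂ => (c (f z) : ℂ)) z ∧
    DifferentiableAt ℝ (fun z : ℂ => (P (f z) : ℂ)) z :=
  ⟨Complex.ofRealCLM.differentiableAt.comp z ((h.hasDerivAt_s _).differentiableAt.comp z hf),
    Complex.ofRealCLM.differentiableAt.comp z ((h.hasDerivAt_c _).differentiableAt.comp z hf),
    Complex.ofRealCLM.differentiableAt.comp z ((h.hasDerivAt_p _).differentiableAt.comp z hf)⟩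

theorem JacobiTriple.differentiableAt_velNum (h₁ : JacobiTriple j 1 S C Y)
    (h₂ : JacobiTriple j (j ^ 2 - 1) s c P) (ε z : ℂ) :
    DifferentiableAt ℝ (fun z : ℂ => velNum j S C Y s c P ε z.re z.im) z := by
  obtain ⟨hS, hC, hY⟩ := h₁.differentiableAt_comp (z := z) Complex.reCLM.differentiableAt
  obtain ⟨hs, hc, hP⟩ := h₂.differentiableAt_comp (z := z) Complex.imCLM.differentiableAt
  simp only [Complex.reCLM_apply, Complex.imCLM_apply] at *
  unfold velNum
  fun_prop

theorem JacobiTriple.differentiableAt_velDen (h₁ : JacobiTriple j 1 S C Y)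
    (h₂ : JacobiTriple j (j ^ 2 - 1) s c P) (z : ℂ) :
    DifferentiableAt ℝ (fun z : ℂ => velDen j S s c z.re z.im) z := by
  obtain ⟨hS, hC, hY⟩ := h₁.differentiableAt_comp (z := z) Complex.reCLM.differentiableAt
  obtain ⟨hs, hc, hP⟩ := h₂.differentiableAt_comp (z := z) Complex.imCLM.differentiableAt
  simp only [Complex.reCLM_apply, Complex.imCLM_apply] at *
  unfold velDen
  fun_prop

theorem JacobiTriple.differentiableAt_recDen (h₁ : JacobiTriple j 1 S C Y)
    (h₂ : JacobiTriple j (j ^ 2 - 1) s c P) (z : ℂ) :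
    DifferentiableAt ℝ (fun z : ℂ => recDen j S P z.re z.im) z := by
  obtain ⟨hS, hC, hY⟩ := h₁.differentiableAt_comp (z := z) Complex.reCLM.differentiableAt
  obtain ⟨hs, hc, hP⟩ := h₂.differentiableAt_comp (z := z) Complex.imCLM.differentiableAt
  simp only [Complex.reCLM_apply, Complex.imCLM_apply] at *
  unfold recDen
  fun_prop

theorem JacobiTriple.hasDerivAt_velNum_left (h₁ : JacobiTriple j 1 S C Y) (ε : ℂ) (a b : ℝ) :
    HasDerivAt (fun a => velNum j S C Y s c P ε a b)
      (j / 2 * c b * P b * (-2 * S a * C a) -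
        2 * ε * j * s b * (C a * Y a / 2 * C a + S a * (-S a * Y a / 2))) a := by
  have hS := (h₁.hasDerivAt_s a).ofReal_comp
  have hC := (h₁.hasDerivAt_c a).ofReal_comp
  have hY := (h₁.hasDerivAt_p a).ofReal_comp
  have := ((hY.const_mul ((j : ℂ) / 2 * c b)).mul_const (P b : ℂ)).sub
    (((hS.const_mul (2 * ε * j)).mul hC).mul_const (s b : ℂ))
  refine this.congr_deriv ?_
  push_cast
  ring

theorem JacobiTriple.hasDerivAt_velNum_right (h₂ : JacobiTriple j (j ^ 2 - 1) s c P)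
    (ε : ℂ) (a b : ℝ) :
    HasDerivAt (fun b => velNum j S C Y s c P ε a b)
      (j / 2 * Y a * (c b * (-2 * ((j : ℂ) ^ 2 - 1) * s b * c b) + (-s b * P b / 2) * P b) -
        2 * ε * j * S a * C a * (c b * P b / 2)) b := by
  have hs := (h₂.hasDerivAt_s b).ofReal_comp
  have hc := (h₂.hasDerivAt_c b).ofReal_comp
  have hP := (h₂.hasDerivAt_p b).ofReal_comp
  have := (((hc.const_mul ((j : ℂ) / 2)).mul_const (Y a : ℂ)).mul hP).sub
    (hs.const_mul (2 * ε * j * S a * C a))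
  refine this.congr_deriv ?_
  push_cast
  ring

theorem JacobiTriple.hasDerivAt_velDen_left (h₁ : JacobiTriple j 1 S C Y) (a b : ℝ) :
    HasDerivAt (fun a => velDen j S s c a b) (2 * S a * (C a * Y a / 2) * (s b : ℂ) ^ 2) a := by
  have hS := (h₁.hasDerivAt_s a).ofReal_comp
  have := ((hS.pow 2).mul_const ((s b : ℂ) ^ 2)).const_add ((j : ℂ) ^ 2 * (c b : ℂ) ^ 2)
  refine this.congr_deriv ?_
  push_cast
  ring

theorem JacobiTriple.hasDerivAt_velDen_right (h₂ : JacobiTriple j (j ^ 2 - 1) s c P) (a b : ℝ) :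
    HasDerivAt (fun b => velDen j S s c a b)
      ((j : ℂ) ^ 2 * 2 * c b * (-s b * P b / 2) + (S a : ℂ) ^ 2 * (2 * s b * (c b * P b / 2)))
      b := by
  have hs := (h₂.hasDerivAt_s b).ofReal_comp
  have hc := (h₂.hasDerivAt_c b).ofReal_comp
  have := ((hc.pow 2).const_mul ((j : ℂ) ^ 2)).add ((hs.pow 2).const_mul ((S a : ℂ) ^ 2))
  refine this.congr_deriv ?_
  push_cast
  ring

theorem JacobiTriple.hasDerivAt_recDen_left (h₁ : JacobiTriple j 1 S C Y) (a b : ℝ) :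
    HasDerivAt (fun a => recDen j S P a b)
      ((j : ℂ) ^ 2 * (-(4 * 2 * S a * (C a * Y a / 2)))) a := by
  have hS := (h₁.hasDerivAt_s a).ofReal_comp
  have := (((hS.pow 2).const_mul 4).const_sub ((P b : ℂ) ^ 2)).const_mul ((j : ℂ) ^ 2)
  refine this.congr_deriv ?_
  push_cast
  ring

theorem JacobiTriple.hasDerivAt_recDen_right (h₂ : JacobiTriple j (j ^ 2 - 1) s c P) (a b : ℝ) :
    HasDerivAt (fun b => recDen j S P a b)
      ((j : ℂ) ^ 2 * (2 * P b * (-2 * ((j : ℂ) ^ 2 - 1) * s b * c b))) b := by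
  have hP := (h₂.hasDerivAt_p b).ofReal_comp
  have := ((hP.pow 2).sub_const (4 * (S a : ℂ) ^ 2)).const_mul ((j : ℂ) ^ 2)
  refine this.congr_deriv ?_
  push_cast
  ring

/-- Where its denominator does not vanish, the extended velocity is holomorphic and solves the
algebraic differential equation of the pendulum. -/
theorem JacobiTriple.exists_hasDerivAt_velocity (h₁ : JacobiTriple j 1 S C Y)
    (h₂ : JacobiTriple j (j ^ 2 - 1) s c P) {z : ℂ} (hz : velDen j S s c z.re z.im ≠ 0) :
    ∃ w : ℂ, HasDerivAt (fun z : ℂ => velNum j S C Y s c P Complex.I z.re z.im /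
        velDen j S s c z.re z.im) w z ∧
      w ^ 2 = 1 - (1 - 2 * (j : ℂ) ^ 2 + (velNum j S C Y s c P Complex.I z.re z.im /
        velDen j S s c z.re z.im) ^ 2 / 2) ^ 2 := by
  obtain ⟨a, b⟩ := z
  simp only at hz
  obtain ⟨r1, r2⟩ := h₁.ofReal_relations a
  obtain ⟨r3, r4⟩ := h₂.ofReal_relations b
  push_cast at r2 r4
  have hi := Complex.I_sq
  have hN := h₁.differentiableAt_velNum h₂ Complex.I ⟨a, b⟩
  have hD := h₁.differentiableAt_velDen h₂ ⟨a, b⟩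
  have hdiff := hN.fun_mul (hD.fun_inv hz)
  simp only [← div_eq_mul_inv] at hdiff
  have ha := (h₁.hasDerivAt_velNum_left (s := s) (c := c) (P := P) Complex.I a b).fun_div
    (h₁.hasDerivAt_velDen_left (s := s) (c := c) a b) hz
  have hb := (h₂.hasDerivAt_velNum_right (S := S) (C := C) (Y := Y) Complex.I a b).fun_div
    (h₂.hasDerivAt_velDen_right (S := S) a b) hz
  set sn : ℂ := j / 2 * (S a * P b + Complex.I * C a * Y a * s b * c b) with hsn
  set cn : ℂ := (j : ℂ) ^ 2 * C a * c b - Complex.I * S a * Y a * s b * P b / 4 with hcn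
  have e1 : sn ^ 2 + cn ^ 2 = velDen j S s c a b ^ 2 := by
    rw [hsn, hcn]
    unfold velDen
    generalize Complex.I = i, (S a : ℂ) = S, (C a : ℂ) = C, (Y a : ℂ) = Y, (s b : ℂ) = s,
      (c b : ℂ) = c, (P b : ℂ) = P, (j : ℂ) = j at r1 r2 r3 r4 hi ⊢
    grind
  have e2 : velNum j S C Y s c P Complex.I a b ^ 2 =
      4 * (j : ℂ) ^ 2 * velDen j S s c a b ^ 2 - 4 * sn ^ 2 := by
    rw [hsn]
    unfold velDen velNum
    generalize Complex.I = i, (S a : ℂ) = S, (C a : ℂ) = C, (Y a : ℂ) = Y, (s b : ℂ) = s,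
      (c b : ℂ) = c, (P b : ℂ) = P, (j : ℂ) = j at r1 r2 r3 r4 hi ⊢
    grind
  refine ⟨-2 * sn * cn / velDen j S s c a b ^ 2,
    hasDerivAt_of_partialDeriv
      (G := fun a b => velNum j S C Y s c P Complex.I a b / velDen j S s c a b) hdiff (ha.congr_deriv ?_) (hb.congr_deriv ?_), ?_⟩
  · congr 1
    rw [hsn, hcn]
    unfold velDen velNum
    generalize Complex.I = i, (S a : ℂ) = S, (C a : ℂ) = C, (Y a : ℂ) = Y, (s b : ℂ) = s,
      (c b : ℂ) = c, (P b : ℂ) = P, (j : ℂ) = j at r1 r2 r3 r4 hi ⊢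
    grind
  · rw [← mul_div_assoc]
    rw [hsn, hcn]
    unfold velDen velNum
    generalize Complex.I = i, (S a : ℂ) = S, (C a : ℂ) = C, (Y a : ℂ) = Y, (s b : ℂ) = s,
      (c b : ℂ) = c, (P b : ℂ) = P, (j : ℂ) = j at r1 r2 r3 r4 hi ⊢
    grind
  · simp only
    rw [div_pow _ _ 2, div_pow _ _ 2, e2]
    generalize velDen j S s c a b = D at *
    have hc2 : cn ^ 2 = D ^ 2 - sn ^ 2 := by rw [← e1]; ring
    field_simp
    rw [hc2]
    ring

/-- Where its denominator does not vanish, the reciprocal of the extended velocity is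
holomorphic. -/
theorem JacobiTriple.hasDerivAt_reciprocal (h₁ : JacobiTriple j 1 S C Y)
    (h₂ : JacobiTriple j (j ^ 2 - 1) s c P) {z : ℂ} (hz : recDen j S P z.re z.im ≠ 0) :
    HasDerivAt (fun z : ℂ => velNum j S C Y s c P (-Complex.I) z.re z.im /
        recDen j S P z.re z.im)
      (((j / 2 * c z.im * P z.im * (-2 * S z.re * C z.re) - 2 * (-Complex.I) * j * s z.im *
          (C z.re * Y z.re / 2 * C z.re + S z.re * (-S z.re * Y z.re / 2))) *
            recDen j S P z.re z.im -
          velNum j S C Y s c P (-Complex.I) z.re z.im *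
            ((j : ℂ) ^ 2 * (-(4 * 2 * S z.re * (C z.re * Y z.re / 2))))) /
        recDen j S P z.re z.im ^ 2) z := by
  obtain ⟨a, b⟩ := z
  simp only at hz
  obtain ⟨r1, r2⟩ := h₁.ofReal_relations a
  obtain ⟨r3, r4⟩ := h₂.ofReal_relations b
  push_cast at r2 r4
  have hi := Complex.I_sq
  have hN := h₁.differentiableAt_velNum h₂ (-Complex.I) ⟨a, b⟩
  have hE := h₁.differentiableAt_recDen h₂ ⟨a, b⟩
  have hdiff := hN.fun_mul (hE.fun_inv hz)
  simp only [← div_eq_mul_inv] at hdiff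
  have ha := (h₁.hasDerivAt_velNum_left (s := s) (c := c) (P := P) (-Complex.I) a b).fun_div
    (h₁.hasDerivAt_recDen_left (P := P) a b) hz
  have hb := (h₂.hasDerivAt_velNum_right (S := S) (C := C) (Y := Y) (-Complex.I) a b).fun_div
    (h₂.hasDerivAt_recDen_right (S := S) a b) hz
  refine hasDerivAt_of_partialDeriv
    (G := fun a b => velNum j S C Y s c P (-Complex.I) a b / recDen j S P a b) hdiff ha (hb.congr_deriv ?_)
  simp only
  rw [← mul_div_assoc]
  unfold velNum recDen
  generalize Complex.I = i, (S a : ℂ) = S, (C a : ℂ) = C, (Y a : ℂ) = Y, (s b : ℂ) = s,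
    (c b : ℂ) = c, (P b : ℂ) = P, (j : ℂ) = j at r1 r2 r3 r4 hi ⊢
  grind

theorem JacobiTriple.eq_zero_of_velDen_eq_zero (hj : j ≠ 0)
    (h₂ : JacobiTriple j (j ^ 2 - 1) s c P) {a b : ℝ} (h : velDen j S s c a b = 0) :
    S a = 0 ∧ c b = 0 ∧ s b ^ 2 = 1 ∧ P b ^ 2 = 4 := by
  have h' : j ^ 2 * c b ^ 2 + S a ^ 2 * s b ^ 2 = 0 := by
    unfold velDen at h
    exact_mod_cast h
  have hc : c b = 0 := by
    have h0 : (j * c b) ^ 2 = 0 := by nlinarith [sq_nonneg (j * c b), sq_nonneg (S a * s b)]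
    simpa [hj] using h0
  have hs : s b ^ 2 = 1 := by simpa [hc] using h₂.sq_add_sq b
  have hS : S a = 0 := by simpa [hc, hs] using h'
  refine ⟨hS, hc, hs, ?_⟩
  rw [h₂.sq_p, hs]
  ring

theorem JacobiTriple.recDen_ne_zero (hj : j ≠ 0)
    (h₂ : JacobiTriple j (j ^ 2 - 1) s c P) {a b : ℝ} (h : velDen j S s c a b = 0) :
    recDen j S P a b ≠ 0 := by
  obtain ⟨hS, -, -, hP⟩ := h₂.eq_zero_of_velDen_eq_zero hj h
  have hP' : (P b : ℂ) ^ 2 = 4 := by exact_mod_cast hP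
  simp [recDen, hS, hP', hj]

theorem JacobiTriple.velocity_eq_inv (h₁ : JacobiTriple j 1 S C Y)
    (h₂ : JacobiTriple j (j ^ 2 - 1) s c P) {a b : ℝ} (h : recDen j S P a b ≠ 0) :
    velNum j S C Y s c P Complex.I a b / velDen j S s c a b =
      (velNum j S C Y s c P (-Complex.I) a b / recDen j S P a b)⁻¹ := by
  have hmul := h₁.velNum_mul_velNum h₂ a b
  rw [inv_div]
  by_cases hD : velDen j S s c a b = 0
  · have hN : velNum j S C Y s c P (-Complex.I) a b = 0 := by
      obtain hj | hj := eq_or_ne j 0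
      · simp [velNum, hj]
      · obtain ⟨hS, hc, -⟩ := h₂.eq_zero_of_velDen_eq_zero hj hD
        simp [velNum, hS, hc]
    rw [hD, hN, div_zero, div_zero]
  · have hN : velNum j S C Y s c P (-Complex.I) a b ≠ 0 := by
      intro h0
      rw [h0, mul_zero] at hmul
      exact mul_ne_zero h hD hmul.symm
    rw [div_eq_div_iff hD hN, hmul]

theorem JacobiTriple.analyticAt_velocity (h₁ : JacobiTriple j 1 S C Y)
    (h₂ : JacobiTriple j (j ^ 2 - 1) s c P) {z : ℂ} (hz : velDen j S s c z.re z.im ≠ 0) :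
    AnalyticAt ℂ (fun z : ℂ => velNum j S C Y s c P Complex.I z.re z.im /
      velDen j S s c z.re z.im) z := by
  rw [Complex.analyticAt_iff_eventually_differentiableAt]
  filter_upwards [(h₁.differentiableAt_velDen h₂ z).continuousAt.eventually_ne hz] with u hu
  obtain ⟨w, hw, -⟩ := h₁.exists_hasDerivAt_velocity h₂ hu
  exact hw.differentiableAt

theorem JacobiTriple.analyticAt_reciprocal (h₁ : JacobiTriple j 1 S C Y)
    (h₂ : JacobiTriple j (j ^ 2 - 1) s c P) {z : ℂ} (hz : recDen j S P z.re z.im ≠ 0) :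
    AnalyticAt ℂ (fun z : ℂ => velNum j S C Y s c P (-Complex.I) z.re z.im /
      recDen j S P z.re z.im) z := by
  rw [Complex.analyticAt_iff_eventually_differentiableAt]
  filter_upwards [(h₁.differentiableAt_recDen h₂ z).continuousAt.eventually_ne hz] with u hu
  exact (h₁.hasDerivAt_reciprocal h₂ hu).differentiableAt

theorem JacobiTriple.eventually_velocity_eq_inv (h₁ : JacobiTriple j 1 S C Y)
    (h₂ : JacobiTriple j (j ^ 2 - 1) s c P) {z : ℂ} (hz : recDen j S P z.re z.im ≠ 0) :
    ∀ᶠ u : ℂ in 𝓝 z, velNum j S C Y s c P Complex.I u.re u.im / velDen j S s c u.re u.im =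
      (velNum j S C Y s c P (-Complex.I) u.re u.im / recDen j S P u.re u.im)⁻¹ := by
  filter_upwards [(h₁.differentiableAt_recDen h₂ z).continuousAt.eventually_ne hz] with u hu
  exact h₁.velocity_eq_inv h₂ hu

theorem JacobiTriple.meromorphicAt_velocity (hj : j ≠ 0) (h₁ : JacobiTriple j 1 S C Y)
    (h₂ : JacobiTriple j (j ^ 2 - 1) s c P) (z : ℂ) :
    MeromorphicAt (fun z : ℂ => velNum j S C Y s c P Complex.I z.re z.im /
      velDen j S s c z.re z.im) z := by
  by_cases hz : velDen j S s c z.re z.im = 0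
  · have hE := h₂.recDen_ne_zero hj hz
    refine (h₁.analyticAt_reciprocal h₂ hE).meromorphicAt.inv.congr ?_
    filter_upwards [(h₁.eventually_velocity_eq_inv h₂ hE).filter_mono nhdsWithin_le_nhds]
      with u hu using hu.symm
  · exact (h₁.analyticAt_velocity h₂ hz).meromorphicAt

/-- At a zero of the denominator, the reciprocal of the extended velocity has a simple zero. -/
theorem JacobiTriple.hasDerivAt_reciprocal_of_velDen_eq_zero (hj : j ≠ 0)
    (h₁ : JacobiTriple j 1 S C Y) (h₂ : JacobiTriple j (j ^ 2 - 1) s c P) {z : ℂ}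
    (hz : velDen j S s c z.re z.im = 0) :
    HasDerivAt (fun z : ℂ => velNum j S C Y s c P (-Complex.I) z.re z.im /
        recDen j S P z.re z.im) (Complex.I * s z.im * Y z.re / (4 * j)) z := by
  obtain ⟨hS, hc, -, hP⟩ := h₂.eq_zero_of_velDen_eq_zero hj hz
  refine (h₁.hasDerivAt_reciprocal h₂ (h₂.recDen_ne_zero hj hz)).congr_deriv ?_
  have hP' : (P z.im : ℂ) ^ 2 = 4 := by exact_mod_cast hP
  have hC : (C z.re : ℂ) ^ 2 = 1 := by
    have := h₁.sq_add_sq z.re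
    rw [hS] at this
    exact_mod_cast (by linarith : C z.re ^ 2 = 1)
  have hj' : (j : ℂ) ≠ 0 := by exact_mod_cast hj
  simp only [velNum, recDen, hS, hc, hP', Complex.ofReal_zero]
  field_simp
  linear_combination (2 * Complex.I * s z.im * Y z.re) * hC

theorem JacobiTriple.reciprocal_eq_zero (hj : j ≠ 0) (h₂ : JacobiTriple j (j ^ 2 - 1) s c P)
    {a b : ℝ} (h : velDen j S s c a b = 0) :
    velNum j S C Y s c P (-Complex.I) a b / recDen j S P a b = 0 := by
  obtain ⟨hS, hc, -⟩ := h₂.eq_zero_of_velDen_eq_zero hj h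
  simp [velNum, hS, hc]

theorem JacobiTriple.velDen_ne_zero_of_analyticAt (hj : j ≠ 0) (h₁ : JacobiTriple j 1 S C Y)
    (h₂ : JacobiTriple j (j ^ 2 - 1) s c P) {z : ℂ}
    (hz : AnalyticAt ℂ (fun z : ℂ => velNum j S C Y s c P Complex.I z.re z.im /
      velDen j S s c z.re z.im) z) : velDen j S s c z.re z.im ≠ 0 := by
  intro hD
  have hE := h₂.recDen_ne_zero hj hD
  obtain ⟨hS, -, hs, -⟩ := h₂.eq_zero_of_velDen_eq_zero hj hD
  have hd := h₁.hasDerivAt_reciprocal_of_velDen_eq_zero hj h₂ hD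
  have hY : Y z.re ≠ 0 := by
    intro h0
    have := h₁.sq_p z.re
    rw [h0, hS] at this
    simp [hj] at this
  have hs0 : s z.im ≠ 0 := by
    intro h0
    simp [h0] at hs
  have hne := hd.eventually_ne (c := 0) (by simp [hj, hY, hs0])
  have hlim : Tendsto (fun z : ℂ => (velNum j S C Y s c P Complex.I z.re z.im /
      velDen j S s c z.re z.im) * (velNum j S C Y s c P (-Complex.I) z.re z.im /
        recDen j S P z.re z.im)) (𝓝[≠] z) (𝓝 0) := by
    have := hz.continuousAt.tendsto.mul hd.continuousAt.tendsto
    rw [h₂.reciprocal_eq_zero hj hD, mul_zero] at this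
    exact this.mono_left nhdsWithin_le_nhds
  have hone : Tendsto (fun z : ℂ => (velNum j S C Y s c P Complex.I z.re z.im /
      velDen j S s c z.re z.im) * (velNum j S C Y s c P (-Complex.I) z.re z.im /
        recDen j S P z.re z.im)) (𝓝[≠] z) (𝓝 1) := by
    refine tendsto_const_nhds.congr' ?_
    filter_upwards [hne, (h₁.eventually_velocity_eq_inv h₂ hE).filter_mono nhdsWithin_le_nhds]
      with u hu hu'
    rw [hu', inv_mul_cancel₀ hu]
  exact zero_ne_one (tendsto_nhds_unique hlim hone)

end JacobiTriple

/-- The Jacobi amplitude: the inverse of the incomplete elliptic integral of the first kind. -/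
theorem exists_amplitude {κ : ℝ} (hκ : κ ^ 2 < 1) :
    0 < Kell κ ∧ ∃ φ : ℝ → ℝ, φ 0 = 0 ∧ φ (Kell κ) = π / 2 ∧
      ∀ v, HasDerivAt φ (Real.sqrt (1 - κ ^ 2 * Real.sin (φ v) ^ 2)) v := by
  have hpos : ∀ t, 0 < 1 - κ ^ 2 * Real.sin t ^ 2 := fun t => by
    nlinarith [Real.sin_sq_le_one t, sq_nonneg κ, sq_nonneg (Real.sin t)]
  have hsqrt : ∀ t, 0 < Real.sqrt (1 - κ ^ 2 * Real.sin t ^ 2) := fun t =>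
    Real.sqrt_pos.2 (hpos t)
  have hcont : Continuous fun t => 1 / Real.sqrt (1 - κ ^ 2 * Real.sin t ^ 2) :=
    continuous_const.div (by fun_prop) fun t => (hsqrt t).ne'
  have hone : ∀ t, 1 ≤ 1 / Real.sqrt (1 - κ ^ 2 * Real.sin t ^ 2) := fun t => by
    rw [le_div_iff₀ (hsqrt t), one_mul, Real.sqrt_le_one]
    nlinarith [mul_nonneg (sq_nonneg κ) (sq_nonneg (Real.sin t))]
  set F : ℝ → ℝ := fun t => ∫ φ in (0 : ℝ)..t, 1 / Real.sqrt (1 - κ ^ 2 * Real.sin φ ^ 2) with hF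
  have hderiv : ∀ t, HasDerivAt F (1 / Real.sqrt (1 - κ ^ 2 * Real.sin t ^ 2)) t := fun t =>
    intervalIntegral.integral_hasDerivAt_right (hcont.intervalIntegrable _ _)
      (hcont.stronglyMeasurableAtFilter _ _) hcont.continuousAt
  have hF0 : F 0 = 0 := intervalIntegral.integral_same
  have hFK : F (π / 2) = Kell κ := rfl
  have hmono : StrictMono F := strictMono_of_hasDerivAt_pos hderiv fun t => by
    linarith [hone t]
  have hsub : Monotone fun t => F t - t := monotone_of_hasDerivAt_nonneg
    (fun t => (hderiv t).sub (hasDerivAt_id t)) fun t => by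
      simpa using hone t
  have htop : Tendsto F atTop atTop := by
    refine tendsto_atTop_mono' _ ?_ tendsto_id
    filter_upwards [eventually_ge_atTop 0] with t ht
    have := hsub ht
    simp only [hF0] at this
    simp only [id]
    linarith
  have hbot : Tendsto F atBot atBot := by
    refine tendsto_atBot_mono' _ ?_ tendsto_id
    filter_upwards [eventually_le_atBot 0] with t ht
    have := hsub ht
    simp only [hF0] at this
    simp only [id]
    linarith
  have hFc : Continuous F := continuous_iff_continuousAt.2 fun t => (hderiv t).continuousAt
  let e := hmono.orderIsoOfSurjective F (hFc.surjective htop hbot)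
  have he : ∀ t, e t = F t := fun t => rfl
  refine ⟨?_, e.symm, ?_, ?_, fun v => ?_⟩
  · rw [← hFK, ← hF0]
    exact hmono (by positivity)
  · rw [e.symm_apply_eq, he, hF0]
  · rw [e.symm_apply_eq, he, hFK]
  · have := (hderiv (e.symm v)).of_local_left_inverse e.symm.continuous.continuousAt
      (one_div_pos.2 (hsqrt _)).ne' (Eventually.of_forall fun u => by
        rw [← he, e.apply_symm_apply])
    simpa using this

/-- If `y = 1 / q` near a simple zero `p` of `q` and `(y')² = 1 - (c + y² / 2)²`, then `y²` has no
residue at `p`, and small contour integrals of `y (f - δ y)` only see the residue of `y f`. -/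
theorem exists_circleIntegral_of_simplePole {p c d : ℂ} {q y f : ℂ → ℂ}
    (hq : AnalyticAt ℂ q p) (hq0 : q p = 0) (hd : HasDerivAt q d p) (hd0 : d ≠ 0)
    (hy : ∀ᶠ z in 𝓝 p, y z = (q z)⁻¹)
    (hode : ∀ᶠ z in 𝓝[≠] p, deriv y z ^ 2 = 1 - (c + y z ^ 2 / 2) ^ 2)
    (hf : Differentiable ℂ f) (δ : ℂ) :
    ∃ ρ₀ > 0, ∀ ρ ∈ Set.Ioo (0 : ℝ) ρ₀,
      (∮ z in C(p, ρ), y z * (f z - δ * y z)) = 2 * π * Complex.I * (f p / d) := by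
  have hq' : ∀ᶠ z in 𝓝 p, deriv q z ≠ 0 :=
    hq.deriv.continuousAt.eventually_ne (by rwa [hd.deriv])
  have hne : ∀ᶠ z in 𝓝[≠] p, q z ≠ 0 := hd.eventually_ne hd0
  have hode' : ∀ᶠ z in 𝓝 p, z ≠ p →
      ∀ᶠ u in 𝓝 z, deriv y u ^ 2 = 1 - (c + y u ^ 2 / 2) ^ 2 := by
    rw [eventually_nhdsWithin_iff] at hode
    filter_upwards [hode.eventually_nhds] with z hz hzp
    filter_upwards [hz, isOpen_ne.mem_nhds hzp] with u hu hup using hu hup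
  rw [eventually_nhdsWithin_iff] at hne
  obtain ⟨r, hr, hball⟩ := Metric.eventually_nhds_iff_ball.1
    (hq.eventually_analyticAt.and (hq'.and (hne.and (hy.eventually_nhds.and hode'))))
  have hqd : DifferentiableOn ℂ q (Metric.ball p r) := fun z hz =>
    (hball z hz).1.differentiableAt.differentiableWithinAt
  have hds : DifferentiableOn ℂ (dslope q p) (Metric.ball p r) :=
    (Complex.differentiableOn_dslope (Metric.ball_mem_nhds p hr)).2 hqd
  have hds0 : ∀ z ∈ Metric.ball p r, dslope q p z ≠ 0 := fun z hz => by
    rcases eq_or_ne z p with rfl | hzp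
    · rwa [dslope_same, hd.deriv]
    · rw [dslope_of_ne _ hzp, slope_def_field, hq0, sub_zero]
      exact div_ne_zero ((hball z hz).2.2.1 hzp) (sub_ne_zero.2 hzp)
  have hprim : ∀ z ∈ Metric.ball p r, z ≠ p →
      HasDerivAt (fun z => deriv y z / y z) (-(1 / 4) * y z ^ 2 - (1 - c ^ 2) * q z ^ 2) z := by
    intro z hz hzp
    obtain ⟨hqa, hqz', hqz, hyz, hoz⟩ := hball z hz
    specialize hqz hzp
    specialize hoz hzp
    have hya : AnalyticAt ℂ y z := (hqa.inv hqz).congr (hyz.mono fun u hu => hu.symm)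
    have hyd : HasDerivAt y (deriv y z) z := hya.differentiableAt.hasDerivAt
    have hydd : HasDerivAt (deriv y) (deriv (deriv y) z) z :=
      hya.deriv.differentiableAt.hasDerivAt
    have hyv : y z = (q z)⁻¹ := hyz.self_of_nhds
    have hy0 : y z ≠ 0 := by rw [hyv]; exact inv_ne_zero hqz
    have hy'0 : deriv y z ≠ 0 := by
      rw [EventuallyEq.deriv_eq (f := fun u => (q u)⁻¹) hyz,
        (hqa.differentiableAt.hasDerivAt.fun_inv hqz).deriv]
      exact div_ne_zero (neg_ne_zero.2 hqz') (pow_ne_zero _ hqz)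
    have hl := hydd.fun_pow 2
    have hrr := ((((hyd.fun_pow 2).div_const 2).const_add c).fun_pow 2).const_sub 1
    have heq := hl.unique (hrr.congr_of_eventuallyEq hoz)
    have hy'' : deriv (deriv y) z = -(c + y z ^ 2 / 2) * y z := by
      apply mul_left_cancel₀ hy'0
      push_cast at heq
      linear_combination heq / 2
    have hquot := hydd.fun_div hyd hy0
    refine hquot.congr_deriv ?_
    have hqy : q z = (y z)⁻¹ := by rw [hyv, inv_inv]
    have ho := hoz.self_of_nhds
    rw [hy'', hqy, ← pow_two (deriv y z), ho]
    field_simp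
    ring
  refine ⟨r, hr, fun ρ hρ => ?_⟩
  have hsub : Metric.closedBall p ρ ⊆ Metric.ball p r := Metric.closedBall_subset_ball hρ.2
  have hsph : ∀ z ∈ Metric.sphere p ρ, z ∈ Metric.ball p r ∧ z ≠ p := fun z hz =>
    ⟨hsub (Metric.sphere_subset_closedBall hz), Metric.ne_of_mem_sphere hz hρ.1.ne'⟩
  have hqc : ContinuousOn q (Metric.sphere p ρ) := hqd.continuousOn.mono fun z hz => (hsph z hz).1
  have hyc : ContinuousOn y (Metric.sphere p ρ) :=
    (hqc.inv₀ fun z hz => (hball z (hsph z hz).1).2.2.1 (hsph z hz).2).congr fun z hz =>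
      (hball z (hsph z hz).1).2.2.2.1.self_of_nhds
  have hq2 : (∮ z in C(p, ρ), (1 - c ^ 2) * q z ^ 2) = 0 :=
    ((((hqd.pow 2).const_mul _).mono hsub).diffContOnCl_ball subset_rfl).circleIntegral_eq_zero
      hρ.1.le
  have hy2i : ∀ α : ℂ, CircleIntegrable (fun z => α * y z ^ 2) p ρ := fun α =>
    ContinuousOn.circleIntegrable hρ.1.le (by fun_prop)
  have hq2i : CircleIntegrable (fun z => (1 - c ^ 2) * q z ^ 2) p ρ :=
    ContinuousOn.circleIntegrable hρ.1.le (by fun_prop)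
  have hyfi : CircleIntegrable (fun z => y z * f z) p ρ :=
    ContinuousOn.circleIntegrable hρ.1.le (hyc.mul hf.continuous.continuousOn)
  have hy2 : (∮ z in C(p, ρ), y z ^ 2) = 0 := by
    have h0 : (∮ z in C(p, ρ), (-(1 / 4) * y z ^ 2 - (1 - c ^ 2) * q z ^ 2)) = 0 :=
      circleIntegral.integral_eq_zero_of_hasDerivWithinAt hρ.1.le fun z hz =>
        (hprim z (hsph z hz).1 (hsph z hz).2).hasDerivWithinAt
    rw [circleIntegral.integral_sub (hy2i _) hq2i, hq2,
      circleIntegral.integral_const_mul] at h0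
    simpa using h0
  have hfp : (∮ z in C(p, ρ), y z * f z) = 2 * π * Complex.I * (f p / d) := by
    have hcauchy := (((hf.differentiableOn.fun_div hds hds0).mono
      hsub)).circleIntegral_sub_inv_smul (Metric.mem_ball_self hρ.1)
    rw [dslope_same, hd.deriv, smul_eq_mul] at hcauchy
    rw [← hcauchy]
    refine circleIntegral.integral_congr hρ.1.le fun z hz => ?_
    obtain ⟨hzb, hzp⟩ := hsph z hz
    simp only [(hball z hzb).2.2.2.1.self_of_nhds, dslope_of_ne _ hzp, slope_def_field, hq0,
      smul_eq_mul, sub_zero]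
    have := sub_ne_zero.2 hzp
    have := (hball z hzb).2.2.1 hzp
    field_simp
  calc (∮ z in C(p, ρ), y z * (f z - δ * y z))
      = ∮ z in C(p, ρ), (y z * f z - δ * y z ^ 2) :=
        circleIntegral.integral_congr hρ.1.le fun z _ => by ring
    _ = _ := by
      rw [circleIntegral.integral_sub hyfi (hy2i _), hfp,
        circleIntegral.integral_const_mul, hy2, mul_zero, sub_zero]

/-- The Jacobi triple of the complementary modulus, rescaled by `k`. -/
theorem exists_jacobiTriple_imaginary {k : ℝ} (hk0 : 0 < k) (hk1 : k < 1) :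
    0 < Kell (Real.sqrt (1 - k ^ 2)) ∧ ∃ s c P : ℝ → ℝ,
      JacobiTriple (1 / k) ((1 / k) ^ 2 - 1) s c P ∧ s 0 = 0 ∧ c 0 = 1 ∧ P 0 = 2 / k ∧
      s (k * Kell (Real.sqrt (1 - k ^ 2))) = 1 ∧ c (k * Kell (Real.sqrt (1 - k ^ 2))) = 0 := by
  have hκ : Real.sqrt (1 - k ^ 2) ^ 2 = 1 - k ^ 2 := Real.sq_sqrt (by nlinarith)
  obtain ⟨hK, φ, hφ0, hφK, hφ⟩ := exists_amplitude (κ := Real.sqrt (1 - k ^ 2))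
    (by rw [hκ]; nlinarith)
  simp only [hκ] at hφ
  have hpos : ∀ t, 0 < 1 - (1 - k ^ 2) * Real.sin t ^ 2 := fun t => by
    nlinarith [Real.sin_sq_le_one t, sq_nonneg (Real.sin t), sq_nonneg k]
  have hk : k ≠ 0 := hk0.ne'
  have hψ : ∀ b, HasDerivAt (fun b => φ (b / k))
      (Real.sqrt (1 - (1 - k ^ 2) * Real.sin (φ (b / k)) ^ 2) * (1 / k)) b := fun b =>
    (hφ (b / k)).comp b ((hasDerivAt_id b).div_const k)
  refine ⟨hK, fun b => Real.sin (φ (b / k)), fun b => Real.cos (φ (b / k)),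
    fun b => 2 / k * Real.sqrt (1 - (1 - k ^ 2) * Real.sin (φ (b / k)) ^ 2),
    ⟨fun b => ?_, fun b => ?_, fun b => ?_, fun b => Real.sin_sq_add_cos_sq _, fun b => ?_⟩,
    ?_, ?_, ?_, ?_, ?_⟩
  · refine (hψ b).sin.congr_deriv ?_
    ring
  · refine (hψ b).cos.congr_deriv ?_
    ring
  · refine (((((hψ b).sin.fun_pow 2).const_mul (1 - k ^ 2)).const_sub 1).sqrt
      (hpos _).ne' |>.const_mul (2 / k)).congr_deriv ?_
    have := (Real.sqrt_pos.2 (hpos (φ (b / k)))).ne'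
    push_cast
    field_simp
  · rw [mul_pow, Real.sq_sqrt (hpos _).le]
    field_simp
    ring
  · simp [hφ0]
  · simp [hφ0]
  · simp [hφ0]
  · simp [hk, hφK]
  · simp [hk, hφK]

/-- Half-angle functions of the rotational solution of the pendulum form a Jacobi triple. -/
theorem jacobiTriple_of_pendulum {k : ℝ} {x : ℝ → ℝ × ℝ} (hx0 : x 0 = (0, 2 / k))
    (hx1 : ∀ t : ℝ, HasDerivAt (fun s => (x s).1) ((x t).2) t)
    (hx2 : ∀ t : ℝ, HasDerivAt (fun s => (x s).2) (-Real.sin ((x t).1)) t) :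
    JacobiTriple (1 / k) 1 (fun t => Real.sin ((x t).1 / 2)) (fun t => Real.cos ((x t).1 / 2))
      (fun t => (x t).2) := by
  have hs : ∀ t, HasDerivAt (fun t => Real.sin ((x t).1 / 2))
      (Real.cos ((x t).1 / 2) * (x t).2 / 2) t := fun t =>
    ((hx1 t).div_const 2).sin.congr_deriv (by ring)
  have hp : ∀ t, HasDerivAt (fun t => (x t).2)
      (-(2 * 1 * Real.sin ((x t).1 / 2) * Real.cos ((x t).1 / 2))) t := fun t => by
    refine (hx2 t).congr_deriv ?_
    rw [mul_one, ← Real.sin_two_mul]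
    congr 2
    ring
  refine ⟨hs, fun t => ((hx1 t).div_const 2).cos.congr_deriv (by ring), hp,
    fun t => Real.sin_sq_add_cos_sq _, fun t => ?_⟩
  have hE : ∀ t, HasDerivAt (fun t => (x t).2 ^ 2 + 4 * Real.sin ((x t).1 / 2) ^ 2) 0 t :=
    fun t => (((hp t).fun_pow 2).add (((hs t).fun_pow 2).const_mul 4)).congr_deriv (by
      push_cast
      ring)
  have := is_const_of_deriv_eq_zero (fun t => (hE t).differentiableAt) (fun t => (hE t).deriv) t 0
  simp only [hx0] at this
  simp only [zero_div, Real.sin_zero] at this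
  linear_combination this

/-- Let `k ∈ (0,1)`, `k' = √(1−k²)`, and let `x̃` be the rotational solution of the
unperturbed pendulum with `x̃(0) = (0, 2/k)`. There is a meromorphic function `y` on a
domain of `ℂ` containing `ℝ` and `ikK(k')` agreeing with `x̃₂` on `ℝ`, satisfying
`(y')² = 1 − (1 − 2/k² + y²/2)²` wherever it is analytic, having a simple pole at `ikK(k')`
with residue `−2i`, and whose contour integral over small circles around `ikK(k')` satisfies
`∮ y(t)(β cos(ωt+θ) − δ y(t)) dt = 4πβ(cosh(ωkK(k')) cos θ − i sinh(ωkK(k')) sin θ)`;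
in particular this integral is nonzero for every `θ` whenever `β > 0`. -/
theorem stmt_18 (k : ℝ) (hk : k ∈ Set.Ioo (0 : ℝ) 1)
    (x : ℝ → ℝ × ℝ) (hx0 : x 0 = (0, 2 / k))
    (hx1 : ∀ t : ℝ, HasDerivAt (fun s => (x s).1) ((x t).2) t)
    (hx2 : ∀ t : ℝ, HasDerivAt (fun s => (x s).2) (-Real.sin ((x t).1)) t) :
    ∃ (U : Set ℂ) (y : ℂ → ℂ),
      IsOpen U ∧ IsConnected U ∧
      (∀ t : ℝ, (t : ℂ) ∈ U) ∧
      (Complex.I * ((k * Kell (Real.sqrt (1 - k ^ 2)) : ℝ) : ℂ)) ∈ U ∧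
      MeromorphicOn y U ∧
      (∀ t : ℝ, y (t : ℂ) = ((x t).2 : ℂ)) ∧
      (∀ z ∈ U, AnalyticAt ℂ y z →
        (deriv y z) ^ 2 = 1 - (1 - 2 / (k : ℂ) ^ 2 + (y z) ^ 2 / 2) ^ 2) ∧
      Tendsto (fun z : ℂ => (z - Complex.I * ((k * Kell (Real.sqrt (1 - k ^ 2)) : ℝ) : ℂ)) * y z)
        (𝓝[≠] (Complex.I * ((k * Kell (Real.sqrt (1 - k ^ 2)) : ℝ) : ℂ)))
        (𝓝 (-2 * Complex.I)) ∧
      (∀ ω : ℝ, 0 < ω → ∀ β δ θ : ℝ, ∃ ρ₀ > 0, ∀ ρ ∈ Set.Ioo (0 : ℝ) ρ₀,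
        (∮ z in C(Complex.I * ((k * Kell (Real.sqrt (1 - k ^ 2)) : ℝ) : ℂ), ρ),
            y z * ((β : ℂ) * Complex.cos ((ω : ℂ) * z + (θ : ℂ)) - (δ : ℂ) * y z))
          = 4 * (π : ℂ) * (β : ℂ) *
            (Complex.cosh ((ω * k * Kell (Real.sqrt (1 - k ^ 2)) : ℝ) : ℂ) * Complex.cos (θ : ℂ)
             - Complex.I * Complex.sinh ((ω * k * Kell (Real.sqrt (1 - k ^ 2)) : ℝ) : ℂ)
               * Complex.sin (θ : ℂ)) ∧
        (0 < β →
          (∮ z in C(Complex.I * ((k * Kell (Real.sqrt (1 - k ^ 2)) : ℝ) : ℂ), ρ),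
              y z * ((β : ℂ) * Complex.cos ((ω : ℂ) * z + (θ : ℂ)) - (δ : ℂ) * y z)) ≠ 0)) := by
  obtain ⟨hk0, hk1⟩ := hk
  have hk : k ≠ 0 := hk0.ne'
  have hj : 1 / k ≠ 0 := one_div_ne_zero hk
  have hkC : (k : ℂ) ≠ 0 := by exact_mod_cast hk
  have h₁ := jacobiTriple_of_pendulum hx0 hx1 hx2
  obtain ⟨hK, s, c, P, h₂, hs0, hc0, hP0, hsK, hcK⟩ := exists_jacobiTriple_imaginary hk0 hk1
  set L := Kell (Real.sqrt (1 - k ^ 2))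
  set S : ℝ → ℝ := fun t => Real.sin ((x t).1 / 2) with hS
  set C : ℝ → ℝ := fun t => Real.cos ((x t).1 / 2)
  set Y : ℝ → ℝ := fun t => (x t).2 with hY
  set p : ℂ := Complex.I * ((k * L : ℝ) : ℂ) with hp
  have hpre : p.re = 0 := by simp [hp]
  have hpim : p.im = k * L := by simp [hp]
  have hDp : velDen (1 / k) S s c p.re p.im = 0 := by
    rw [hpre, hpim]
    simp [velDen, hcK, hS, hx0]
  have hEp := h₂.recDen_ne_zero hj hDp
  have hqd := h₁.hasDerivAt_reciprocal_of_velDen_eq_zero hj h₂ hDp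
  have hqa := h₁.analyticAt_reciprocal h₂ hEp
  have hyq := h₁.eventually_velocity_eq_inv h₂ hEp
  have hq0 := h₂.reciprocal_eq_zero (C := C) (Y := Y) hj hDp
  set q : ℂ → ℂ := fun z => velNum (1 / k) S C Y s c P (-Complex.I) z.re z.im /
    recDen (1 / k) S P z.re z.im
  set y : ℂ → ℂ := fun z => velNum (1 / k) S C Y s c P Complex.I z.re z.im /
    velDen (1 / k) S s c z.re z.im with hy
  have hval : Complex.I * s p.im * Y p.re / (4 * ((1 / k : ℝ) : ℂ)) = Complex.I / 2 := by
    rw [hpre, hpim, hsK]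
    simp only [hY, hx0]
    push_cast
    field_simp
    norm_num
  rw [hval] at hqd
  have hI : Complex.I / 2 ≠ 0 := div_ne_zero Complex.I_ne_zero two_ne_zero
  have hode : ∀ z, AnalyticAt ℂ y z →
      deriv y z ^ 2 = 1 - (1 - 2 / (k : ℂ) ^ 2 + y z ^ 2 / 2) ^ 2 := fun z hz => by
    obtain ⟨w, hw, hw2⟩ := h₁.exists_hasDerivAt_velocity h₂
      (h₁.velDen_ne_zero_of_analyticAt hj h₂ hz)
    rw [hw.deriv, hw2]
    push_cast
    ring
  have hana : ∀ᶠ z in 𝓝[≠] p, AnalyticAt ℂ y z :=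
    (h₁.meromorphicAt_velocity hj h₂ p).eventually_analyticAt
  refine ⟨Set.univ, y, isOpen_univ, isConnected_univ, fun _ => trivial, trivial,
    fun z _ => h₁.meromorphicAt_velocity hj h₂ z, fun t => ?_, fun z _ hz => hode z hz, ?_, ?_⟩
  · simp only [hy, velNum, velDen, Complex.ofReal_re, Complex.ofReal_im, hs0, hc0, hP0]
    push_cast
    field_simp
    simp [hY]
  · have hlim := (hasDerivAt_iff_tendsto_slope.1 hqd).inv₀ hI
    rw [show (Complex.I / 2)⁻¹ = -2 * Complex.I by simp [div_eq_mul_inv]] at hlim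
    refine hlim.congr' ?_
    filter_upwards [hyq.filter_mono nhdsWithin_le_nhds] with z hz
    rw [show y z = (q z)⁻¹ from hz, slope_def_field, show q p = 0 from hq0, sub_zero, inv_div, div_eq_mul_inv]
  · intro ω hω β δ θ
    obtain ⟨ρ₀, hρ₀, hint⟩ := exists_circleIntegral_of_simplePole
      (f := fun z => (β : ℂ) * Complex.cos ((ω : ℂ) * z + (θ : ℂ))) hqa hq0 hqd hI hyq
      (hana.mono hode) (by fun_prop) δ
    refine ⟨ρ₀, hρ₀, fun ρ hρ => ?_⟩
    have hcos : Complex.cos ((ω : ℂ) * p + (θ : ℂ)) =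
        Complex.cosh ((ω * k * L : ℝ) : ℂ) * Complex.cos (θ : ℂ) -
          Complex.I * Complex.sinh ((ω * k * L : ℝ) : ℂ) * Complex.sin (θ : ℂ) := by
      rw [show (ω : ℂ) * p = ((ω * k * L : ℝ) : ℂ) * Complex.I by rw [hp]; push_cast; ring,
        Complex.cos_add, Complex.cos_mul_I, Complex.sin_mul_I]
      ring
    have hval : (∮ z in C(p, ρ),
        y z * ((β : ℂ) * Complex.cos ((ω : ℂ) * z + (θ : ℂ)) - (δ : ℂ) * y z)) =
        4 * (π : ℂ) * (β : ℂ) * (Complex.cosh ((ω * k * L : ℝ) : ℂ) * Complex.cos (θ : ℂ) -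
          Complex.I * Complex.sinh ((ω * k * L : ℝ) : ℂ) * Complex.sin (θ : ℂ)) := by
      rw [hint ρ hρ, hcos]
      have := Complex.I_ne_zero
      field_simp
      ring
    refine ⟨hval, fun hβ => ?_⟩
    rw [hval]
    have hβC : (β : ℂ) ≠ 0 := by exact_mod_cast hβ.ne'
    have hπ : (π : ℂ) ≠ 0 := by exact_mod_cast Real.pi_ne_zero
    refine mul_ne_zero (mul_ne_zero (mul_ne_zero (by norm_num) hπ) hβC) fun h0 => ?_
    rw [← Complex.ofReal_cosh, ← Complex.ofReal_sinh, ← Complex.ofReal_cos,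
      ← Complex.ofReal_sin] at h0
    have hre := congrArg Complex.re h0
    have him := congrArg Complex.im h0
    simp only [Complex.sub_re, Complex.sub_im, Complex.mul_re, Complex.mul_im, Complex.I_re,
      Complex.I_im, Complex.ofReal_re, Complex.ofReal_im, Complex.zero_re, Complex.zero_im]
      at hre him
    have hcosh := (Real.cosh_pos (ω * k * L)).ne'
    have hsinh : Real.sinh (ω * k * L) ≠ 0 := (Real.sinh_pos_iff.2 (by positivity)).ne'
    have hcθ : Real.cos θ = 0 := by simpa [hcosh] using hre
    have hsθ : Real.sin θ = 0 := by simpa [hsinh] using him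
    have := Real.sin_sq_add_cos_sq θ
    simp [hcθ, hsθ] at this
end

section
/- Let k ∈ (0, 1) and let f be a holomorphic function on a neighborhood of 0 in ℂ such that f(0) = 1/k and f(s)² = (1 − s²)/(k² − s²) for all s in that neighborhood. Then for all sufficiently small ρ > 0, the contour integral over the positively oriented circle |s| = ρ satisfies ∮_{|s|=ρ} f(s)/s² ds = 0. -/
/-- If the square of `f` is critical at `z` and `f z ≠ 0`, then `f` is critical at `z`. -/
lemma deriv_eq_zero_of_hasDerivAt_sq_zero {f : ℂ → ℂ} {z : ℂ} (hf : DifferentiableAt ℂ f z)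
    (hz : f z ≠ 0) (hsq : HasDerivAt (fun s => f s ^ 2) 0 z) : deriv f z = 0 := by
  have h := (hf.hasDerivAt.pow 2).unique hsq
  simpa [hz] using h

/-- The function `(1 - s²) / (a² - s²)` is critical at `0`. -/
lemma hasDerivAt_one_sub_sq_div_sq_sub_sq {a : ℂ} (ha : a ≠ 0) :
    HasDerivAt (fun s : ℂ => (1 - s ^ 2) / (a ^ 2 - s ^ 2)) 0 0 := by
  have hsq : HasDerivAt (fun s : ℂ => s ^ 2) 0 0 := by simpa using hasDerivAt_pow 2 (0 : ℂ)
  simpa using (hsq.const_sub 1).fun_div (hsq.const_sub (a ^ 2)) (by simpa using ha)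

/-- Let `k ∈ (0,1)` and let `f` be holomorphic near `0 ∈ ℂ` with `f(0) = 1/k` and
`f(s)² = (1 − s²)/(k² − s²)` near `0`. Then for all sufficiently small `ρ > 0`, the contour
integral of `f(s)/s²` over the positively oriented circle `|s| = ρ` vanishes. -/
theorem stmt_19 (k : ℝ) (hk : k ∈ Set.Ioo (0 : ℝ) 1) (f : ℂ → ℂ) (V : Set ℂ)
    (hV : V ∈ nhds (0 : ℂ)) (hf : AnalyticOnNhd ℂ f V) (hf0 : f 0 = 1 / (k : ℂ))
    (hfsq : ∀ s ∈ V, (f s) ^ 2 = (1 - s ^ 2) / ((k : ℂ) ^ 2 - s ^ 2)) :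
    ∃ ρ₀ > 0, ∀ ρ ∈ Set.Ioo (0 : ℝ) ρ₀,
      (∮ s in C(0, ρ), f s / s ^ 2) = 0 := by
  have hk0 : (k : ℂ) ≠ 0 := by exact_mod_cast hk.1.ne'
  have hderiv : deriv f 0 = 0 := by
    refine deriv_eq_zero_of_hasDerivAt_sq_zero (hf 0 (mem_of_mem_nhds hV)).differentiableAt
      (by simp [hf0, hk0]) ?_
    exact (hasDerivAt_one_sub_sq_div_sq_sub_sq hk0).congr_of_eventuallyEq
      (Filter.eventually_of_mem hV hfsq)
  obtain ⟨ρ₀, hρ₀, hball⟩ := Metric.mem_nhds_iff.mp hV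
  refine ⟨ρ₀, hρ₀, fun ρ hρ => ?_⟩
  have hd : DifferentiableOn ℂ f (Metric.closedBall 0 ρ) :=
    hf.differentiableOn.mono ((Metric.closedBall_subset_ball hρ.2).trans hball)
  simpa [hderiv, div_eq_inv_mul] using hd.deriv_eq_smul_circleIntegral hρ.1
end
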